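/- Let Δ be an alphabet and let u, w, u_l, u_r ∈ Δ* be words. Consider the two-sided quotient L = { x ∈ Δ* : u_l x u_r ∈ u w* }, where u w* = { u wⁿ : n ∈ ℕ }. Then L is empty, or L is a singleton, or there exist a word h ∈ Δ* and a cyclic rotation p of w (i.e., w = w₁ w₂ and p = w₂ w₁ for some decomposition) such that L ⊆ h p* = { h pⁿ : n ∈ ℕ }. -/

import Mathlib

namespace LTWpaper

/-- Trees over a ranked alphabet: a symbol of arity `n` with `n` children. -/
inductive RTree (F : Type) (ar : F → ℕ) : Type
  | node (f : F) (ts : Fin (ar f) → RTree F ar) : RTree F ar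

/-- A rule right-hand side `u₀ q₁(x_{σ(1)}) u₁ … q_n(x_{σ(n)}) u_n`:
`word i` is `u_i` (for `i : Fin (n+1)`), `st i` is `q_{i+1}` (for `i : Fin n`),
and position `i` reads the subtree `x_{perm i}`. -/
structure LTWRule (Δ Q : Type) (n : ℕ) where
  word : Fin (n + 1) → List Δ
  st : Fin n → Q
  perm : Equiv.Perm (Fin n)

/-- A (deterministic) linear tree-to-word transducer with axiom `pre init(x) post`. -/
structure LTW (F : Type) (ar : F → ℕ) (Δ Q : Type) where
  pre : List Δ
  init : Q
  post : List Δ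
  rules : Q → (f : F) → Option (LTWRule Δ Q (ar f))

/-- `u 0 ++ ws 0 ++ u 1 ++ ws 1 ++ ⋯ ++ ws (n-1) ++ u n`. -/
def interleave {Δ : Type} (n : ℕ) (u : Fin (n + 1) → List Δ) (ws : Fin n → List Δ) :
    List Δ :=
  u 0 ++ (List.finRange n).foldr (fun i acc => ws i ++ u i.succ ++ acc) []

/-- The partial function `⟦M⟧_q` computed by state `q`. -/
def LTW.semState {F Δ Q : Type} {ar : F → ℕ} (M : LTW F ar Δ Q) :
    RTree F ar → Q → Option (List Δ)
  | .node f ts, q =>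
    match M.rules q f with
    | none => none
    | some r =>
      if h : ∀ i : Fin (ar f), (M.semState (ts (r.perm i)) (r.st i)).isSome then
        some (interleave (ar f) r.word fun i => (M.semState (ts (r.perm i)) (r.st i)).get (h i))
      else none

/-- The partial function `⟦M⟧` computed by the transducer. -/
def LTW.sem {F Δ Q : Type} {ar : F → ℕ} (M : LTW F ar Δ Q) (t : RTree F ar) :
    Option (List Δ) :=
  (M.semState t M.init).map fun w => M.pre ++ w ++ M.post

/-- The output language `L_q` of a state. -/
def LTW.lang {F Δ Q : Type} {ar : F → ℕ} (M : LTW F ar Δ Q) (q : Q) : Set (List Δ) :=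
  {w | ∃ t, M.semState t q = some w}

/-- Standing assumption: every state has nonempty domain. -/
def LTW.NonemptyDoms {F Δ Q : Type} {ar : F → ℕ} (M : LTW F ar Δ Q) : Prop :=
  ∀ q : Q, ∃ t w, M.semState t q = some w

/-- `w^n`, the `n`-fold concatenation of the word `w`. -/
def listPow {Δ : Type} (w : List Δ) : ℕ → List Δ
  | 0 => []
  | n + 1 => w ++ listPow w n

/-- `lcp L = ε`: the only common prefix of all words of `L` is the empty word. -/
def LcpEps {Δ : Type} (L : Set (List Δ)) : Prop :=
  ∀ w : List Δ, (∀ v ∈ L, w <+: v) → w = []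

/-- `lcs L = ε`: the only common suffix of all words of `L` is the empty word. -/
def LcsEps {Δ : Type} (L : Set (List Δ)) : Prop :=
  ∀ w : List Δ, (∀ v ∈ L, w <:+ v) → w = []

/-- A language is earliest if `lcp L = lcs L = ε`. -/
def EarliestLang {Δ : Type} (L : Set (List Δ)) : Prop := LcpEps L ∧ LcsEps L

/-- `L ⊆ w*`. -/
def SubPow {Δ : Type} (w : List Δ) (L : Set (List Δ)) : Prop :=
  ∀ v ∈ L, ∃ n : ℕ, v = listPow w n

/-- `L` is periodic of period `w`: `w` is a smallest word with `L ⊆ w*`. -/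
def PeriodicOf {Δ : Type} (L : Set (List Δ)) (w : List Δ) : Prop :=
  SubPow w L ∧ ∀ w' : List Δ, SubPow w' L → w.length ≤ w'.length

/-- `L` is periodic. -/
def Periodic {Δ : Type} (L : Set (List Δ)) : Prop := ∃ w, PeriodicOf L w

/-- `L` is quasi-periodic on the left of handle `u` and period `w`:
`w` is a smallest word with `L ⊆ u w*`. -/
def QPLeftOf {Δ : Type} (L : Set (List Δ)) (u w : List Δ) : Prop :=
  (∀ v ∈ L, ∃ n : ℕ, v = u ++ listPow w n) ∧
  ∀ w' : List Δ, (∀ v ∈ L, ∃ n : ℕ, v = u ++ listPow w' n) → w.length ≤ w'.length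

/-- `L` is quasi-periodic on the right of handle `u` and period `w`:
`w` is a smallest word with `L ⊆ w* u`. -/
def QPRightOf {Δ : Type} (L : Set (List Δ)) (u w : List Δ) : Prop :=
  (∀ v ∈ L, ∃ n : ℕ, v = listPow w n ++ u) ∧
  ∀ w' : List Δ, (∀ v ∈ L, ∃ n : ℕ, v = listPow w' n ++ u) → w.length ≤ w'.length

/-- `L` is quasi-periodic (on the left or on the right). -/
def QuasiPeriodic {Δ : Type} (L : Set (List Δ)) : Prop :=
  (∃ u w, QPLeftOf L u w) ∨ (∃ u w, QPRightOf L u w)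

/-- The language `L u = { v u : v ∈ L }`. -/
def appendLang {Δ : Type} (L : Set (List Δ)) (u : List Δ) : Set (List Δ) :=
  {v | ∃ x ∈ L, v = x ++ u}

/-- The language `L₁ u L₂ = { a u b : a ∈ L₁, b ∈ L₂ }`. -/
def pairLang {Δ : Type} (L₁ : Set (List Δ)) (u : List Δ) (L₂ : Set (List Δ)) :
    Set (List Δ) :=
  {v | ∃ a ∈ L₁, ∃ b ∈ L₂, v = a ++ u ++ b}

/-- An LTW is earliest: every state `q` satisfies `lcp L_q = lcs L_q = ε`, and in every rule
every part `qᵢ(x) uᵢ` satisfies `lcp (L_{qᵢ} uᵢ) = ε`. -/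
def LTW.Earliest {F Δ Q : Type} {ar : F → ℕ} (M : LTW F ar Δ Q) : Prop :=
  (∀ q : Q, EarliestLang (M.lang q)) ∧
  ∀ (q : Q) (f : F) (r : LTWRule Δ Q (ar f)), M.rules q f = some r →
    ∀ i : Fin (ar f), LcpEps (appendLang (M.lang (r.st i)) (r.word i.succ))

/-- An erasing state: `L_q = {ε}`. -/
def LTW.Erasing {F Δ Q : Type} {ar : F → ℕ} (M : LTW F ar Δ Q) (q : Q) : Prop :=
  M.lang q = {([] : List Δ)}

/-- Erase-ordered: in every rule, if `qᵢ` is erasing then every later `q_j` is erasing,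
`σ(i) ≤ σ(j)` and `u_j = ε`. -/
def LTW.EraseOrdered {F Δ Q : Type} {ar : F → ℕ} (M : LTW F ar Δ Q) : Prop :=
  ∀ (q : Q) (f : F) (r : LTWRule Δ Q (ar f)), M.rules q f = some r →
    ∀ i j : Fin (ar f), M.Erasing (r.st i) → i ≤ j →
      M.Erasing (r.st j) ∧ r.perm i ≤ r.perm j ∧ r.word j.succ = []

/-- Co-reachable pairs of states of two transducers over the same input alphabet. -/
inductive CoReach {F Δ Q₁ Q₂ : Type} {ar : F → ℕ}
    (M₁ : LTW F ar Δ Q₁) (M₂ : LTW F ar Δ Q₂) : Q₁ → Q₂ → Prop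
  | base : CoReach M₁ M₂ M₁.init M₂.init
  | step {q₁ : Q₁} {q₂ : Q₂} {f : F} {r₁ : LTWRule Δ Q₁ (ar f)} {r₂ : LTWRule Δ Q₂ (ar f)}
      {i j : Fin (ar f)} :
      CoReach M₁ M₂ q₁ q₂ → M₁.rules q₁ f = some r₁ → M₂.rules q₂ f = some r₂ →
      r₁.perm i = r₂.perm j → CoReach M₁ M₂ (r₁.st i) (r₂.st j)

/-- Two LTWs are same-ordered: co-reachable states either both lack a rule for `f`,
or have rules for `f` with the same permutation. -/
def SameOrdered {F Δ Q₁ Q₂ : Type} {ar : F → ℕ}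
    (M₁ : LTW F ar Δ Q₁) (M₂ : LTW F ar Δ Q₂) : Prop :=
  ∀ q₁ q₂, CoReach M₁ M₂ q₁ q₂ → ∀ f : F,
    (M₁.rules q₁ f = none ∧ M₂.rules q₂ f = none) ∨
    ∃ (r₁ : LTWRule Δ Q₁ (ar f)) (r₂ : LTWRule Δ Q₂ (ar f)),
      M₁.rules q₁ f = some r₁ ∧ M₂.rules q₂ f = some r₂ ∧ r₁.perm = r₂.perm

/-- `Accessible q p`: state `p` is accessible from state `q`. -/
inductive LTW.Accessible {F Δ Q : Type} {ar : F → ℕ} (M : LTW F ar Δ Q) : Q → Q → Prop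
  | refl (q : Q) : M.Accessible q q
  | step {q p : Q} {f : F} {r : LTWRule Δ Q (ar f)} (i : Fin (ar f)) :
      M.Accessible q p → M.rules p f = some r → M.Accessible q (r.st i)

/-- Partial normal form. -/
def LTW.PartialNormalForm {F Δ Q : Type} {ar : F → ℕ} (M : LTW F ar Δ Q) : Prop :=
  (∀ q : Q, QuasiPeriodic (M.lang q) → EarliestLang (M.lang q)) ∧
  M.EraseOrdered ∧
  ∀ (q : Q) (f : F) (r : LTWRule Δ Q (ar f)), M.rules q f = some r →
    ∀ (i : ℕ) (hi : i + 1 < ar f),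
      QuasiPeriodic (pairLang (M.lang (r.st ⟨i, Nat.lt_of_succ_lt hi⟩))
          (r.word (Fin.succ ⟨i, Nat.lt_of_succ_lt hi⟩)) (M.lang (r.st ⟨i + 1, hi⟩))) →
      EarliestLang (pairLang (M.lang (r.st ⟨i, Nat.lt_of_succ_lt hi⟩))
          (r.word (Fin.succ ⟨i, Nat.lt_of_succ_lt hi⟩)) (M.lang (r.st ⟨i + 1, hi⟩))) ∧
      r.perm ⟨i, Nat.lt_of_succ_lt hi⟩ < r.perm ⟨i + 1, hi⟩

theorem listPow_succ_right {Δ : Type} (w : List Δ) (n : ℕ) :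
    listPow w (n + 1) = listPow w n ++ w := by
  induction n with
  | zero => simp [listPow]
  | succ k ih =>
    rw [listPow, ih, ← List.append_assoc, ← listPow, ih]

theorem listPow_add {Δ : Type} (w : List Δ) (m n : ℕ) :
    listPow w (m + n) = listPow w m ++ listPow w n := by
  induction m with
  | zero => simp [listPow]
  | succ k ih =>
    rw [Nat.add_right_comm, listPow, ih, listPow, List.append_assoc]

theorem listPow_nil {Δ : Type} (n : ℕ) : listPow ([] : List Δ) n = [] := by
  induction n with
  | zero => rfl
  | succ k ih => simp [listPow, ih]

theorem listPow_rot {Δ : Type} (a b : List Δ) (n : ℕ) :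
    b ++ listPow (a ++ b) n = listPow (b ++ a) n ++ b := by
  induction n with
  | zero => simp [listPow]
  | succ k ih =>
    have h : b ++ listPow (a ++ b) (k + 1) = (b ++ a) ++ (b ++ listPow (a ++ b) k) := by
      simp [listPow]
    rw [h, ih]
    simp [listPow]

theorem conj_aux {Δ : Type} (w : List Δ) (N : ℕ) : ∀ r : List Δ, r.length ≤ N →
    ∃ w₁ w₂ : List Δ, w = w₁ ++ w₂ ∧
      ∀ (k : ℕ) (y : List Δ), y ++ r = r ++ listPow w k → y = listPow (w₂ ++ w₁) k := by
  induction N with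
  | zero =>
    intro r hr
    have : r = [] := List.length_eq_zero_iff.mp (by omega)
    subst this
    exact ⟨w, [], by simp, fun k y h => by simpa using h⟩
  | succ N ih =>
    intro r hr
    by_cases h1 : r <:+ w
    · obtain ⟨a, rfl⟩ := h1
      refine ⟨a, r, rfl, fun k y h => ?_⟩
      rw [listPow_rot] at h
      exact List.append_cancel_right h
    by_cases hw : w = []
    · subst hw
      refine ⟨[], [], rfl, fun k y h => ?_⟩
      simp only [List.append_nil, listPow_nil] at h ⊢
      simpa using h
    by_cases h2 : w <:+ r
    · obtain ⟨a, rfl⟩ := h2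
      have hl : 0 < w.length := List.length_pos_iff.mpr hw
      obtain ⟨w₁, w₂, e, H⟩ := ih a (by simp at hr; omega)
      refine ⟨w₁, w₂, e, fun k y h => H k y ?_⟩
      have h' : (y ++ a) ++ w = (a ++ listPow w k) ++ w := by
        rw [List.append_assoc, h, List.append_assoc, List.append_assoc,
          ← listPow_succ_right]
        rfl
      exact List.append_cancel_right h'
    · refine ⟨w, [], by simp, fun k y h => ?_⟩
      cases k with
      | zero => simpa [listPow] using h
      | succ k =>
        exfalso
        have s1 : r <:+ y ++ r := List.suffix_append _ _
        have s2 : w <:+ y ++ r := by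
          rw [h, listPow_succ_right, ← List.append_assoc]
          exact List.suffix_append _ _
        rcases List.suffix_or_suffix_of_suffix s1 s2 with s | s
        · exact h1 s
        · exact h2 s

/-- a two-sided quotient of `u w*` is empty, a singleton, or contained in
`h p*` for some handle `h` and some cyclic rotation `p` of `w`. -/
theorem quotient_of_quasiPeriodic_left
    {Δ : Type} (u w uₗ uᵣ : List Δ) :
    {x : List Δ | ∃ n : ℕ, uₗ ++ x ++ uᵣ = u ++ listPow w n} = ∅ ∨
    (∃ x : List Δ, {x : List Δ | ∃ n : ℕ, uₗ ++ x ++ uᵣ = u ++ listPow w n} = {x}) ∨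
    ∃ (h : List Δ) (w₁ w₂ : List Δ), w = w₁ ++ w₂ ∧
      ∀ x ∈ {x : List Δ | ∃ n : ℕ, uₗ ++ x ++ uᵣ = u ++ listPow w n},
        ∃ n : ℕ, x = h ++ listPow (w₂ ++ w₁) n := by
  by_cases hne : ∃ n x, uₗ ++ x ++ uᵣ = u ++ listPow w n
  · right; right
    classical
    obtain ⟨x₀, hx₀⟩ := Nat.find_spec hne
    obtain ⟨w₁, w₂, e, H⟩ := conj_aux w _ uᵣ le_rfl
    refine ⟨x₀, w₁, w₂, e, ?_⟩
    rintro x ⟨n, hx⟩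
    have hn : Nat.find hne ≤ n := Nat.find_min' hne ⟨x, hx⟩
    obtain ⟨k, rfl⟩ := Nat.exists_eq_add_of_le hn
    rw [listPow_add, ← List.append_assoc, ← hx₀] at hx
    have hlen := congrArg List.length hx
    have hlen0 := congrArg List.length hx₀
    simp only [List.length_append] at hlen
    have p1 : uₗ ++ x <+: uₗ ++ x ++ uᵣ := List.prefix_append _ _
    have p2 : uₗ ++ x₀ <+: uₗ ++ x ++ uᵣ := by
      rw [hx, List.append_assoc (uₗ ++ x₀)]
      exact List.prefix_append _ _
    have p3 : uₗ ++ x₀ <+: uₗ ++ x :=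
      List.prefix_of_prefix_length_le p2 p1 (by simp only [List.length_append]; omega)
    rw [List.prefix_append_right_inj] at p3
    obtain ⟨y, rfl⟩ := p3
    refine ⟨k, ?_⟩
    rw [← H k y]
    simpa [List.append_assoc] using hx
  · left
    ext x
    simp only [Set.mem_setOf_eq, Set.mem_empty_iff_false, iff_false]
    rintro ⟨n, hn⟩
    exact hne ⟨n, x, hn⟩


end LTWpaper
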